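/- Let d ≥ 0, let (σ₁, σ₂) be a secure equilibrium in the truncated game G^d of a quantitative two-player reachability game and let ρ be its outcome. Assume ρ has a prefix αβγ, where β contains at least one vertex, such that Visit(α) = Visit(αβγ), last(α) = last(αβ), |αβ| ≤ l·|V| and |αβγ| = (l+1)·|V| for some l ≥ 1. Then if Visit(α) ≠ ∅ or Visit(ρ) ≠ {1,2}, one has Visit(α) = Visit(ρ). -/

import Mathlib

/-- A quantitative multiplayer reachability game: a finite directed graph whose
vertex set is partitioned among the players (via `owner`), with an initial vertex `v0`,
an edge relation `E` such that every vertex has an outgoing edge, and a goal set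
`goal i` for each player `i`. -/
structure ReachGame (P : Type) (V : Type) where
  owner : V → P
  v0 : V
  E : V → V → Prop
  total : ∀ v : V, ∃ w : V, E v w
  goal : P → Set V

namespace ReachGame

variable {P V : Type} [DecidableEq P] (G : ReachGame P V)

/-- The last vertex of a history (with default `v0`). -/
def lastV (h : List V) : V := h.getLastD G.v0

/-- A history: a nonempty finite path in the graph starting at `v0`. -/
def IsHistory (h : List V) : Prop :=
  h ≠ [] ∧ h.head? = some G.v0 ∧ List.Chain' G.E h

/-- A play: an infinite path starting at `v0`. -/
def IsPlay (ρ : ℕ → V) : Prop :=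
  ρ 0 = G.v0 ∧ ∀ k : ℕ, G.E (ρ k) (ρ (k + 1))

/-- `σ` is a (total encoding of a) strategy of player `i`: on every history ending in
a vertex owned by `i` it chooses a successor along an edge. -/
def IsStrategy (i : P) (σ : List V → V) : Prop :=
  ∀ h : List V, G.IsHistory h → G.owner (G.lastV h) = i → G.E (G.lastV h) (σ h)

/-- A strategy profile: one strategy per player. -/
def IsProfile (prof : P → List V → V) : Prop :=
  ∀ i : P, G.IsStrategy i (prof i)

/-- The history of length `n` (i.e. with `n` edges) obtained by letting the players
follow the profile `prof` from `v0`. -/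
def outHist (prof : P → List V → V) : ℕ → List V
  | 0 => [G.v0]
  | n + 1 => outHist prof n ++ [prof (G.owner (G.lastV (outHist prof n))) (outHist prof n)]

/-- The outcome play of the strategy profile `prof`. -/
def outcome (prof : P → List V → V) (n : ℕ) : V :=
  G.lastV (G.outHist prof n)

/-- The cost of player `i` for the play `ρ`: the least `l` with `ρ l ∈ goal i`,
and `⊤` (`+∞`) if there is no such `l`. -/
noncomputable def cost (i : P) (ρ : ℕ → V) : ℕ∞ :=
  sInf {n : ℕ∞ | ∃ l : ℕ, n = (l : ℕ∞) ∧ ρ l ∈ G.goal i}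

/-- Nash equilibrium: no player can strictly decrease his cost by a unilateral
deviation. -/
def IsNash (prof : P → List V → V) : Prop :=
  ∀ (j : P) (σ' : List V → V), G.IsStrategy j σ' →
    G.cost j (G.outcome prof) ≤ G.cost j (G.outcome (Function.update prof j σ'))

/-- `h ≈_σ h'` : the strategy `σ` of player `i` behaves the same after `h` and `h'`,
i.e. `σ (h ++ δ) = σ (h' ++ δ)` for every suffix `δ` making both `h ++ δ` and
`h' ++ δ` histories ending in a vertex of player `i`. -/
def MemEq (i : P) (σ : List V → V) (h h' : List V) : Prop :=
  ∀ δ : List V,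
    G.IsHistory (h ++ δ) → G.owner (G.lastV (h ++ δ)) = i →
    G.IsHistory (h' ++ δ) → G.owner (G.lastV (h' ++ δ)) = i →
    σ (h ++ δ) = σ (h' ++ δ)

/-- A strategy of player `i` is finite-memory if the relation `≈_σ` has finitely many
equivalence classes on histories, i.e. there is a finite set of histories meeting
every class. -/
def FiniteMemory (i : P) (σ : List V → V) : Prop :=
  ∃ S : Finset (List V), ∀ h : List V, G.IsHistory h →
    ∃ h' ∈ S, G.IsHistory h' ∧ G.MemEq i σ h h'

/-- A profile is finite-memory if each of its strategies is. -/
def FiniteMemoryProfile (prof : P → List V → V) : Prop :=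
  ∀ i : P, G.FiniteMemory i (prof i)

/-- `Visit h`: the set of players whose goal set is visited by the finite path `h`. -/
def visitL (h : List V) : Set P := {i : P | ∃ v ∈ h, v ∈ G.goal i}

/-- The type of a strategy profile: the set of players whose goal set is visited by
the outcome. -/
def typeOf (prof : P → List V → V) : Set P :=
  {i : P | ∃ l : ℕ, G.outcome prof l ∈ G.goal i}

/-! ### The truncated game `G^d` -/

/-- A strategy of player `i` in the truncated game `G^d` : it chooses a successor on
every history with less than `d` edges (list length `≤ d`) ending in a vertex of `i`. -/
def IsStrategyTrunc (d : ℕ) (i : P) (σ : List V → V) : Prop :=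
  ∀ h : List V, G.IsHistory h → h.length ≤ d → G.owner (G.lastV h) = i →
    G.E (G.lastV h) (σ h)

/-- A strategy profile of the truncated game `G^d`. -/
def IsProfileTrunc (d : ℕ) (prof : P → List V → V) : Prop :=
  ∀ i : P, G.IsStrategyTrunc d i (prof i)

/-- The cost of player `i` for a finite play `h` (a list of vertices): the least
position of `h` lying in `goal i`, and `⊤` if `goal i` is not visited. -/
noncomputable def costList (i : P) (h : List V) : ℕ∞ :=
  sInf {n : ℕ∞ | ∃ l : ℕ, n = (l : ℕ∞) ∧ l < h.length ∧ h.getD l G.v0 ∈ G.goal i}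

/-- Nash equilibrium of the truncated game `G^d` (whose plays are the histories with
exactly `d` edges). -/
def IsNashTrunc (d : ℕ) (prof : P → List V → V) : Prop :=
  ∀ (j : P) (σ' : List V → V), G.IsStrategyTrunc d j σ' →
    G.costList j (G.outHist prof d) ≤
      G.costList j (G.outHist (Function.update prof j σ') d)

/-- The type of a strategy profile of the truncated game `G^d`. -/
def typeOfTrunc (d : ℕ) (prof : P → List V → V) : Set P :=
  G.visitL (G.outHist prof d)

end ReachGame

/-- `(x₁,x₂) ≺₁ (y₁,y₂)` iff `x₁ > y₁`, or `x₁ = y₁` and `x₂ < y₂` :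
player 1 prefers the cost profile `y` to `x`. -/
def prec1 (x y : ℕ∞ × ℕ∞) : Prop := y.1 < x.1 ∨ (x.1 = y.1 ∧ x.2 < y.2)

/-- `(x₁,x₂) ≺₂ (y₁,y₂)` iff `x₂ > y₂`, or `x₂ = y₂` and `x₁ < y₁` :
player 2 prefers the cost profile `y` to `x`. -/
def prec2 (x y : ℕ∞ × ℕ∞) : Prop := y.2 < x.2 ∨ (x.2 = y.2 ∧ x.1 < y.1)

namespace ReachGame

variable {V : Type} (G : ReachGame (Fin 2) V)

/-- The pair of costs of the two players for the play `ρ`. -/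
noncomputable def costPair (ρ : ℕ → V) : ℕ∞ × ℕ∞ := (G.cost 0 ρ, G.cost 1 ρ)

/-- Secure equilibrium: no player `j` has a `≺ⱼ`-profitable deviation. -/
def IsSecure (prof : Fin 2 → List V → V) : Prop :=
  (∀ σ' : List V → V, G.IsStrategy 0 σ' →
    ¬ prec1 (G.costPair (G.outcome prof))
        (G.costPair (G.outcome (Function.update prof 0 σ')))) ∧
  (∀ σ' : List V → V, G.IsStrategy 1 σ' →
    ¬ prec2 (G.costPair (G.outcome prof))
        (G.costPair (G.outcome (Function.update prof 1 σ'))))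

/-- The pair of costs of the two players for a finite play `h`. -/
noncomputable def costListPair (h : List V) : ℕ∞ × ℕ∞ := (G.costList 0 h, G.costList 1 h)

/-- Secure equilibrium of the truncated game `G^d`. -/
def IsSecureTrunc (d : ℕ) (prof : Fin 2 → List V → V) : Prop :=
  (∀ σ' : List V → V, G.IsStrategyTrunc d 0 σ' →
    ¬ prec1 (G.costListPair (G.outHist prof d))
        (G.costListPair (G.outHist (Function.update prof 0 σ') d))) ∧
  (∀ σ' : List V → V, G.IsStrategyTrunc d 1 σ' →
    ¬ prec2 (G.costListPair (G.outHist prof d))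
        (G.costListPair (G.outHist (Function.update prof 1 σ') d)))

end ReachGame

/-!
Let `α` be the history of the outcome after `b` steps and suppose player `i` first reaches his goal
after more than `b + |V|` steps. If `last(α)` lies in the attractor of `F_i`, which is complete
after `|V|` iterations, then player `i` can deviate and reach `F_i` within `|V|` further steps,
improving his own cost. Otherwise the other player `j` can deviate and keep the play outside the
attractor. This makes the cost of `i` infinite, and it does not hurt `j`, who either has reached his
goal in `α` already or never reaches it in the outcome. Either way the equilibrium is not secure.
-/

open Function

theorem isFixedPt_iterate_card {α : Type*} [Fintype α] {f : Set α → Set α} (hf : Monotone f)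
    {s : Set α} (hs : s ⊆ f s) : IsFixedPt f (f^[Fintype.card α] s) := by
  have mono : Monotone fun n => f^[n] s := hf.monotone_iterate_of_le_map hs
  have eq_of_ncard_eq {m n : ℕ} (hmn : m ≤ n) (h : (f^[m] s).ncard = (f^[n] s).ncard) :
      f^[m] s = f^[n] s := Set.eq_of_subset_of_ncard_le (mono hmn) h.ge
  have ncard_succ_eq : (f^[Fintype.card α + 1] s).ncard = (f^[Fintype.card α] s).ncard := by
    refine Nat.stabilises_of_monotone (f := fun n => (f^[n] s).ncard)
      (fun m n hmn => Set.ncard_le_ncard (mono hmn)) (fun m => ?_) (fun m hm => ?_) (Nat.le_succ _)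
    · exact (Set.ncard_le_card _).trans_eq Nat.card_eq_fintype_card
    · have heq := eq_of_ncard_eq m.le_succ hm
      rw [iterate_succ_apply' f m, iterate_succ_apply' f (m + 1), ← heq]
  rw [IsFixedPt, ← iterate_succ_apply' f]
  exact (eq_of_ncard_eq (Nat.le_succ _) ncard_succ_eq.symm).symm

theorem mem_or_notMem_of_ne_of_ne_empty_or_ne_univ {s t : Set (Fin 2)} {i j : Fin 2} (hji : j ≠ i)
    (hs : i ∉ s) (ht : i ∈ t) (hst : s ≠ ∅ ∨ t ≠ Set.univ) : j ∈ s ∨ j ∉ t := by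
  have eq_of_ne {k : Fin 2} (hk : k ≠ i) : k = j := by lia
  refine hst.imp (fun hs_ne => ?_) (fun ht_ne => ?_)
  · obtain ⟨k, hk⟩ := Set.nonempty_iff_ne_empty.2 hs_ne
    exact eq_of_ne (ne_of_mem_of_not_mem hk hs) ▸ hk
  · obtain ⟨k, hk⟩ := (Set.ne_univ_iff_exists_notMem t).1 ht_ne
    exact eq_of_ne (ne_of_mem_of_not_mem ht hk).symm ▸ hk

namespace ReachGame

section Histories

variable {P V : Type} (G : ReachGame P V)

theorem lastV_append_singleton (h : List V) (v : V) : G.lastV (h ++ [v]) = v := by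
  simp [lastV]

theorem lastV_eq_getLast {h : List V} (hne : h ≠ []) : G.lastV h = h.getLast hne := by
  rw [lastV, List.getLastD_eq_getLast?, List.getLast?_eq_getLast_of_ne_nil hne, Option.getD_some]

theorem lastV_mem {h : List V} (hne : h ≠ []) : G.lastV h ∈ h := by
  rw [G.lastV_eq_getLast hne]
  exact List.getLast_mem hne

variable {G} in
theorem IsHistory.append_singleton {h : List V} {v : V} (hh : G.IsHistory h)
    (hv : G.E (G.lastV h) v) : G.IsHistory (h ++ [v]) := by
  obtain ⟨hne, hhead, hchain⟩ := hh
  refine ⟨by simp, by simp [hhead], hchain.append (List.isChain_singleton v) ?_⟩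
  simpa [List.getLast?_eq_getLast_of_ne_nil hne, ← G.lastV_eq_getLast hne] using hv

variable {G} in
theorem visitL_mono {h h' : List V} (hsub : h ⊆ h') : G.visitL h ⊆ G.visitL h' :=
  fun _ ⟨v, hv, hgoal⟩ => ⟨v, hsub hv, hgoal⟩

theorem length_outHist (prof : P → List V → V) (n : ℕ) : (G.outHist prof n).length = n + 1 := by
  induction n with
  | zero => rfl
  | succ n ih => simp [outHist, ih]

theorem outHist_ne_nil (prof : P → List V → V) (n : ℕ) : G.outHist prof n ≠ [] :=
  List.ne_nil_of_length_eq_add_one (G.length_outHist prof n)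

theorem outHist_prefix_outHist (prof : P → List V → V) {m n : ℕ} (hmn : m ≤ n) :
    G.outHist prof m <+: G.outHist prof n := by
  induction n, hmn using Nat.le_induction with
  | base => exact List.prefix_rfl
  | succ n _ ih => exact ih.trans (List.prefix_append _ _)

variable {G} in
theorem eq_outHist_of_prefix {prof : P → List V → V} {h : List V} {d n : ℕ}
    (hpre : h <+: G.outHist prof d) (hlen : h.length = n + 1) : h = G.outHist prof n := by
  have hnd : n ≤ d := by simpa [hlen, length_outHist] using hpre.length_le
  have hlen_eq : h.length = (G.outHist prof n).length := by rw [hlen, length_outHist]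
  exact (List.prefix_of_prefix_length_le hpre (G.outHist_prefix_outHist prof hnd)
    hlen_eq.le).eq_of_length hlen_eq

theorem outHist_congr {prof prof' : P → List V → V} {n : ℕ}
    (hagree : ∀ i h, h.length ≤ n → prof i h = prof' i h) :
    G.outHist prof n = G.outHist prof' n := by
  induction n with
  | zero => rfl
  | succ n ih =>
    rw [outHist, outHist, ih fun i h hh => hagree i h (hh.trans n.le_succ),
      hagree _ _ (G.length_outHist prof' n).le]

variable {G} in
theorem IsProfileTrunc.edge_lastV_outHist {d : ℕ} {prof : P → List V → V}
    (hprof : G.IsProfileTrunc d prof) {n : ℕ} (hn : n < d) (hh : G.IsHistory (G.outHist prof n)) :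
    G.E (G.lastV (G.outHist prof n))
      (prof (G.owner (G.lastV (G.outHist prof n))) (G.outHist prof n)) :=
  hprof _ _ hh ((G.length_outHist prof n).trans_le hn) rfl

variable {G} in
theorem IsProfileTrunc.isHistory_outHist {d : ℕ} {prof : P → List V → V}
    (hprof : G.IsProfileTrunc d prof) {n : ℕ} (hn : n ≤ d) : G.IsHistory (G.outHist prof n) := by
  induction n with
  | zero => exact ⟨by simp [outHist], by simp [outHist], List.isChain_singleton _⟩
  | succ n ih =>
    have hh := ih (n.le_succ.trans hn)
    exact hh.append_singleton (hprof.edge_lastV_outHist hn hh)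

variable {G} in
theorem isProfileTrunc_update [DecidableEq P] {d : ℕ} {prof : P → List V → V}
    (hprof : G.IsProfileTrunc d prof) {k : P} {σ : List V → V} (hσ : G.IsStrategyTrunc d k σ) :
    G.IsProfileTrunc d (update prof k σ) :=
  (forall_update_iff prof fun i τ => G.IsStrategyTrunc d i τ).2 ⟨hσ, fun i _ => hprof i⟩

end Histories

section Costs

variable {P V : Type} {G : ReachGame P V} {i : P} {h p : List V}

theorem mem_visitL_iff_getD :
    i ∈ G.visitL h ↔ ∃ n, n < h.length ∧ h.getD n G.v0 ∈ G.goal i := by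
  constructor
  · rintro ⟨v, hv, hgoal⟩
    obtain ⟨n, hn, rfl⟩ := List.getElem_of_mem hv
    exact ⟨n, hn, by rwa [List.getD_eq_getElem _ _ hn]⟩
  · rintro ⟨n, hn, hgoal⟩
    rw [List.getD_eq_getElem _ _ hn] at hgoal
    exact ⟨_, List.getElem_mem hn, hgoal⟩

theorem costList_lt_top_iff : G.costList i h < ⊤ ↔ i ∈ G.visitL h := by
  rw [mem_visitL_iff_getD, costList, sInf_lt_iff]
  constructor
  · rintro ⟨_, ⟨n, rfl, hn⟩, -⟩
    exact ⟨n, hn⟩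
  · rintro ⟨n, hn⟩
    exact ⟨n, ⟨n, rfl, hn⟩, ENat.natCast_lt_top n⟩

theorem costList_lt_length_iff_of_prefix (hpre : p <+: h) :
    G.costList i h < p.length ↔ i ∈ G.visitL p := by
  obtain ⟨t, rfl⟩ := hpre
  rw [mem_visitL_iff_getD, costList, sInf_lt_iff]
  constructor
  · rintro ⟨_, ⟨n, rfl, -, hgoal⟩, hn⟩
    rw [Nat.cast_lt] at hn
    exact ⟨n, hn, by rwa [List.getD_append _ _ _ _ hn] at hgoal⟩
  · rintro ⟨n, hn, hgoal⟩
    refine ⟨n, ⟨n, rfl, ?_, by rwa [List.getD_append _ _ _ _ hn]⟩, Nat.cast_lt.2 hn⟩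
    exact hn.trans_le (List.prefix_append p t).length_le

theorem costList_eq_of_prefix (hpre : p <+: h) (hi : i ∈ G.visitL p) :
    G.costList i h = G.costList i p := by
  have hlt : G.costList i p < p.length :=
    (costList_lt_length_iff_of_prefix List.prefix_rfl).2 hi
  obtain ⟨t, rfl⟩ := hpre
  apply le_antisymm
  · refine sInf_le_sInf ?_
    rintro _ ⟨n, rfl, hn, hgoal⟩
    exact ⟨n, rfl, hn.trans_le (List.prefix_append p t).length_le,
      by rwa [List.getD_append _ _ _ _ hn]⟩
  · refine le_sInf ?_
    rintro _ ⟨n, rfl, -, hgoal⟩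
    rcases lt_or_ge n p.length with hn | hn
    · exact sInf_le ⟨n, rfl, hn, by rwa [List.getD_append _ _ _ _ hn] at hgoal⟩
    · exact hlt.le.trans (Nat.cast_le.2 hn)

end Costs

section Attractor

variable {P V : Type} (G : ReachGame P V)

/-- The controllable predecessor of `S` for player `k`: the vertices from which `k` can force the
next vertex to lie in `S`, all other players playing against him. -/
def controllablePred (k : P) (S : Set V) : Set V :=
  {v | (G.owner v = k → ∃ w, G.E v w ∧ w ∈ S) ∧ (G.owner v ≠ k → ∀ w, G.E v w → w ∈ S)}

theorem controllablePred_mono (k : P) : Monotone (G.controllablePred k) :=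
  fun _ _ hsub _ hv =>
    ⟨fun hk => (hv.1 hk).imp fun _ hw => hw.imp_right (hsub ·),
      fun hk w hw => hsub (hv.2 hk w hw)⟩

theorem controllablePred_univ (k : P) : G.controllablePred k Set.univ = Set.univ :=
  Set.eq_univ_of_forall fun v =>
    ⟨fun _ => (G.total v).imp fun _ hw => ⟨hw, trivial⟩, fun _ _ _ => trivial⟩

/-- The `n`-step attractor of `T` for player `k`: the vertices from which `k` can force a visit to
`T` within `n` steps. -/
def attractor (k : P) (T : Set V) (n : ℕ) : Set V :=
  (fun S => T ∪ G.controllablePred k S)^[n] T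

theorem attractor_succ (k : P) (T : Set V) (n : ℕ) :
    G.attractor k T (n + 1) = T ∪ G.controllablePred k (G.attractor k T n) :=
  iterate_succ_apply' _ n T

theorem union_controllablePred_attractor_card [Fintype V] (k : P) (T : Set V) :
    T ∪ G.controllablePred k (G.attractor k T (Fintype.card V)) =
      G.attractor k T (Fintype.card V) :=
  isFixedPt_iterate_card (monotone_const.sup (G.controllablePred_mono k)) Set.subset_union_left

theorem compl_controllablePred (G : ReachGame (Fin 2) V) {i j : Fin 2} (hij : i ≠ j) (S : Set V) :
    (G.controllablePred i S)ᶜ = G.controllablePred j Sᶜ := by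
  ext v
  have howner : G.owner v ≠ i ↔ G.owner v = j := by omega
  by_cases hv : G.owner v = i <;>
    simp [controllablePred, hv, hij, ← howner]

end Attractor

section Enforcement

variable {P V : Type} (G : ReachGame P V)

/-- A set `S` of histories is enforceable by player `k` if at every history in `S` he can force the
next history to lie in `S` again. -/
def IsEnforceable (k : P) (S : Set (List V)) : Prop :=
  ∀ h ∈ S, G.IsHistory h → G.lastV h ∈ G.controllablePred k {w | h ++ [w] ∈ S}

theorem isEnforceable_reach (k : P) (T : Set V) (m : ℕ) :
    G.IsEnforceable k
      {h | (∃ v ∈ h, v ∈ T) ∨ G.lastV h ∈ G.attractor k T (m - h.length)} := by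
  intro h hS hh
  by_cases hvisit : ∃ v ∈ h, v ∈ T
  · have hlast : G.lastV h ∈ G.controllablePred k Set.univ := by simp [controllablePred_univ]
    refine G.controllablePred_mono k (fun w _ => Or.inl ?_) hlast
    exact hvisit.imp fun _ hv => ⟨List.mem_append_left _ hv.1, hv.2⟩
  · have hlast_notMem : G.lastV h ∉ T := fun hT => hvisit ⟨_, G.lastV_mem hh.1, hT⟩
    have hlast := hS.resolve_left hvisit
    rcases hsteps : m - h.length with _ | n
    · rw [hsteps] at hlast
      exact absurd hlast hlast_notMem
    · rw [hsteps, attractor_succ] at hlast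
      refine G.controllablePred_mono k (fun w hw => Or.inr ?_) (hlast.resolve_left hlast_notMem)
      rwa [lastV_append_singleton, List.length_append, List.length_singleton, ← Nat.sub_sub,
        hsteps, Nat.add_sub_cancel]

theorem isEnforceable_avoid {k : P} {T A : Set V} (hTA : T ⊆ A)
    (hA : Aᶜ ⊆ G.controllablePred k Aᶜ) :
    G.IsEnforceable k {h | (∀ v ∈ h, v ∉ T) ∧ G.lastV h ∉ A} := by
  intro h ⟨havoid, hlast⟩ _
  refine G.controllablePred_mono k (fun w hw => ?_) (hA hlast)
  refine ⟨fun v hv => ?_, by rwa [lastV_append_singleton]⟩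
  rcases List.mem_append.1 hv with hv | hv
  · exact havoid v hv
  · rw [List.mem_singleton.1 hv]
    exact fun hT => hw (hTA hT)

variable {G}

theorem IsStrategyTrunc.exists_steering {d : ℕ} {k : P} {σ : List V → V}
    (hσ : G.IsStrategyTrunc d k σ) (b : ℕ) (S : Set (List V)) :
    ∃ σ' : List V → V, G.IsStrategyTrunc d k σ' ∧ (∀ h, h.length ≤ b → σ' h = σ h) ∧
      ∀ h, b < h.length → (∃ w, G.E (G.lastV h) w ∧ h ++ [w] ∈ S) → h ++ [σ' h] ∈ S := by
  classical
  let σ' (h : List V) : V :=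
    if hw : b < h.length ∧ ∃ w, G.E (G.lastV h) w ∧ h ++ [w] ∈ S then hw.2.choose else σ h
  refine ⟨σ', fun h hh hlen howner => ?_, fun h hlen => ?_, fun h hlen hw => ?_⟩
  · by_cases hw : b < h.length ∧ ∃ w, G.E (G.lastV h) w ∧ h ++ [w] ∈ S
    · simpa only [σ', dif_pos hw] using hw.2.choose_spec.1
    · simpa only [σ', dif_neg hw] using hσ h hh hlen howner
  · exact dif_neg fun hw => hlen.not_gt hw.1
  · have hsteer : b < h.length ∧ ∃ w, G.E (G.lastV h) w ∧ h ++ [w] ∈ S := ⟨hlen, hw⟩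
    simpa only [σ', dif_pos hsteer] using hw.choose_spec.2

variable [DecidableEq P] {d b : ℕ} {prof : P → List V → V}

theorem IsEnforceable.exists_deviation {k : P} {S : Set (List V)} (hS : G.IsEnforceable k S)
    (hprof : G.IsProfileTrunc d prof) (hb : G.outHist prof b ∈ S) :
    ∃ σ' : List V → V, G.IsStrategyTrunc d k σ' ∧
      G.outHist (update prof k σ') b = G.outHist prof b ∧
      ∀ n, b ≤ n → n ≤ d → G.outHist (update prof k σ') n ∈ S := by
  obtain ⟨σ', hσ', hagree, hsteer⟩ := (hprof k).exists_steering b S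
  have hprof' := isProfileTrunc_update hprof hσ'
  have heq : G.outHist (update prof k σ') b = G.outHist prof b := by
    refine G.outHist_congr fun i h hlen => ?_
    rcases eq_or_ne i k with rfl | hik
    · rw [update_self, hagree h hlen]
    · rw [update_of_ne hik]
  refine ⟨σ', hσ', heq, fun n hbn => ?_⟩
  induction n, hbn using Nat.le_induction with
  | base => exact fun _ => heq ▸ hb
  | succ n hbn ih =>
    intro hnd
    have hh := hprof'.isHistory_outHist (n.le_succ.trans hnd)
    have hcontrol := hS _ (ih (n.le_succ.trans hnd)) hh
    by_cases howner : G.owner (G.lastV (G.outHist (update prof k σ') n)) = k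
    · rw [outHist, howner, update_self]
      exact hsteer _ (by rw [length_outHist]; lia) (hcontrol.1 howner)
    · exact hcontrol.2 howner _ (hprof'.edge_lastV_outHist hnd hh)

theorem IsProfileTrunc.exists_reaching_deviation (hprof : G.IsProfileTrunc d prof) {k : P}
    {T : Set V} {n : ℕ} (hbn : b + n ≤ d)
    (hlast : G.lastV (G.outHist prof b) ∈ G.attractor k T n) :
    ∃ σ' : List V → V, G.IsStrategyTrunc d k σ' ∧
      ∃ v ∈ G.outHist (update prof k σ') (b + n), v ∈ T := by
  have hb : G.lastV (G.outHist prof b) ∈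
      G.attractor k T (b + n + 1 - (G.outHist prof b).length) := by
    rwa [length_outHist, Nat.add_right_comm, Nat.add_sub_cancel_left]
  obtain ⟨σ', hσ', -, hstay⟩ :=
    (G.isEnforceable_reach k T (b + n + 1)).exists_deviation hprof (Or.inr hb)
  refine ⟨σ', hσ', (hstay (b + n) (Nat.le_add_right b n) hbn).elim id fun hend => ?_⟩
  rw [length_outHist, Nat.sub_self] at hend
  exact ⟨_, G.lastV_mem (G.outHist_ne_nil _ _), hend⟩

theorem IsProfileTrunc.exists_avoiding_deviation [Fintype V] {G : ReachGame (Fin 2) V}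
    {prof : Fin 2 → List V → V} (hprof : G.IsProfileTrunc d prof) {i j : Fin 2} (hij : i ≠ j)
    {T : Set V} (hbd : b ≤ d) (havoid : ∀ v ∈ G.outHist prof b, v ∉ T)
    (hlast : G.lastV (G.outHist prof b) ∉ G.attractor i T (Fintype.card V)) :
    ∃ σ' : List V → V, G.IsStrategyTrunc d j σ' ∧
      G.outHist (update prof j σ') b = G.outHist prof b ∧
      ∀ v ∈ G.outHist (update prof j σ') d, v ∉ T := by
  set A := G.attractor i T (Fintype.card V)
  have hfix : T ∪ G.controllablePred i A = A := G.union_controllablePred_attractor_card i T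
  have hTA : T ⊆ A := Set.subset_union_left.trans hfix.subset
  have hA : Aᶜ ⊆ G.controllablePred j Aᶜ := by
    rw [← G.compl_controllablePred hij, Set.compl_subset_compl]
    exact Set.subset_union_right.trans hfix.subset
  obtain ⟨σ', hσ', heq, hstay⟩ :=
    (G.isEnforceable_avoid hTA hA).exists_deviation hprof ⟨havoid, hlast⟩
  exact ⟨σ', hσ', heq, (hstay d hbd le_rfl).1⟩

end Enforcement

section Equilibria

variable {P V : Type} {d b : ℕ}

theorem IsNashTrunc.mem_visitL_of_mem_attractor [DecidableEq P] {G : ReachGame P V}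
    {prof : P → List V → V} (hnash : G.IsNashTrunc d prof) (hprof : G.IsProfileTrunc d prof)
    {i : P} {n : ℕ} (hbn : b + n ≤ d)
    (hlast : G.lastV (G.outHist prof b) ∈ G.attractor i (G.goal i) n) :
    i ∈ G.visitL (G.outHist prof (b + n)) := by
  obtain ⟨σ', hσ', hreach⟩ := hprof.exists_reaching_deviation hbn hlast
  rw [← costList_lt_length_iff_of_prefix (G.outHist_prefix_outHist prof hbn)]
  calc G.costList i (G.outHist prof d)
      ≤ G.costList i (G.outHist (update prof i σ') d) := hnash i σ' hσ'
    _ < (G.outHist (update prof i σ') (b + n)).length :=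
        (costList_lt_length_iff_of_prefix (G.outHist_prefix_outHist _ hbn)).2 hreach
    _ = (G.outHist prof (b + n)).length := by simp only [length_outHist]

variable {G : ReachGame (Fin 2) V} {prof : Fin 2 → List V → V}

theorem IsSecureTrunc.isNashTrunc (hsec : G.IsSecureTrunc d prof) : G.IsNashTrunc d prof := by
  intro j σ' hσ'
  fin_cases j
  · exact not_lt.1 fun hlt => hsec.1 σ' hσ' (Or.inl hlt)
  · exact not_lt.1 fun hlt => hsec.2 σ' hσ' (Or.inl hlt)

theorem IsSecureTrunc.costList_le_of_costList_le (hsec : G.IsSecureTrunc d prof) {i j : Fin 2}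
    (hij : i ≠ j) {σ' : List V → V} (hσ' : G.IsStrategyTrunc d j σ')
    (hj : G.costList j (G.outHist (update prof j σ') d) ≤ G.costList j (G.outHist prof d)) :
    G.costList i (G.outHist (update prof j σ') d) ≤ G.costList i (G.outHist prof d) := by
  have heq := (hsec.isNashTrunc j σ' hσ').antisymm hj
  rcases (by lia : j = 0 ∧ i = 1 ∨ j = 1 ∧ i = 0) with ⟨rfl, rfl⟩ | ⟨rfl, rfl⟩
  · exact not_lt.1 fun hlt => hsec.1 σ' hσ' (Or.inr ⟨heq, hlt⟩)
  · exact not_lt.1 fun hlt => hsec.2 σ' hσ' (Or.inr ⟨heq, hlt⟩)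

theorem IsSecureTrunc.notMem_visitL_of_notMem_attractor [Fintype V]
    (hsec : G.IsSecureTrunc d prof) (hprof : G.IsProfileTrunc d prof) {i j : Fin 2} (hij : i ≠ j)
    (hbd : b ≤ d) (hi : i ∉ G.visitL (G.outHist prof b))
    (hj : j ∈ G.visitL (G.outHist prof b) ∨ j ∉ G.visitL (G.outHist prof d))
    (hlast : G.lastV (G.outHist prof b) ∉ G.attractor i (G.goal i) (Fintype.card V)) :
    i ∉ G.visitL (G.outHist prof d) := by
  obtain ⟨σ', hσ', heq, havoid⟩ := hprof.exists_avoiding_deviation hij hbd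
    (fun v hv hgoal => hi ⟨v, hv, hgoal⟩) hlast
  have hcost_j :
      G.costList j (G.outHist (update prof j σ') d) ≤ G.costList j (G.outHist prof d) := by
    rcases hj with hj | hj
    · rw [costList_eq_of_prefix (G.outHist_prefix_outHist prof hbd) hj,
        costList_eq_of_prefix (heq ▸ G.outHist_prefix_outHist (update prof j σ') hbd) hj]
    · exact le_top.trans (not_lt_top_iff.1 (mt costList_lt_top_iff.1 hj)).ge
  intro hvisit
  have hcost_i := hsec.costList_le_of_costList_le hij hσ' hcost_j
  obtain ⟨v, hv, hgoal⟩ := costList_lt_top_iff.1 (hcost_i.trans_lt (costList_lt_top_iff.2 hvisit))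
  exact havoid v hv hgoal

end Equilibria

end ReachGame

theorem secure_visit_prefix_general {V : Type} [Fintype V] (G : ReachGame (Fin 2) V) (d : ℕ)
    (prof : Fin 2 → List V → V) (hprof : G.IsProfileTrunc d prof) (hsec : G.IsSecureTrunc d prof)
    (α δ rest : List V) (hα : α ≠ []) (hdecomp : G.outHist prof d = α ++ δ ++ rest)
    (hvisit : G.visitL α = G.visitL (α ++ δ)) (hlen : Fintype.card V ≤ δ.length)
    (hcase : G.visitL α ≠ ∅ ∨ G.visitL (G.outHist prof d) ≠ Set.univ) :
    G.visitL α = G.visitL (G.outHist prof d) := by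
  have hpre : α ++ δ <+: G.outHist prof d := hdecomp ▸ List.prefix_append _ _
  have hpreα : α <+: G.outHist prof d := (List.prefix_append α δ).trans hpre
  obtain ⟨b, hb⟩ := Nat.exists_eq_add_one.2 (List.length_pos_of_ne_nil hα)
  have hlen_le : b + δ.length ≤ d := by
    have := hpre.length_le
    rw [G.length_outHist, List.length_append] at this
    lia
  have hαδ : α ++ δ = G.outHist prof (b + δ.length) :=
    ReachGame.eq_outHist_of_prefix hpre (by rw [List.length_append]; lia)
  refine (ReachGame.visitL_mono hpreα.subset).antisymm fun i hi => by_contra fun hiα => ?_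
  obtain ⟨j, hji⟩ := exists_ne i
  have hj : j ∈ G.visitL α ∨ j ∉ G.visitL (G.outHist prof d) :=
    mem_or_notMem_of_ne_of_ne_empty_or_ne_univ hji hiα hi hcase
  obtain rfl := ReachGame.eq_outHist_of_prefix hpreα hb
  by_cases hlast : G.lastV (G.outHist prof b) ∈ G.attractor i (G.goal i) (Fintype.card V)
  · have hi' := hsec.isNashTrunc.mem_visitL_of_mem_attractor hprof (by lia) hlast
    rw [hvisit, hαδ] at hiα
    exact hiα (ReachGame.visitL_mono (G.outHist_prefix_outHist prof (by lia)).subset hi')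
  · exact hsec.notMem_visitL_of_notMem_attractor hprof hji.symm (by lia) hiα hj hlast hi

/-- Let `(σ₁,σ₂)` be a secure equilibrium of the truncated game
`G^d` of a two-player game, whose outcome `ρ` has a prefix `αβγ` (with `β` nonempty)
such that `Visit(α) = Visit(αβγ)`, `last(α) = last(αβ)`, `|αβ| ≤ l·|V|` and
`|αβγ| = (l+1)·|V|` for some `l ≥ 1` (lengths in edges).  Then if `Visit(α) ≠ ∅` or
`Visit(ρ) ≠ {1,2}`, one has `Visit(α) = Visit(ρ)`. -/
theorem secure_visit_prefix {V : Type} [Fintype V]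
    (G : ReachGame (Fin 2) V) (d : ℕ)
    (prof : Fin 2 → List V → V)
    (hprof : G.IsProfileTrunc d prof) (hsec : G.IsSecureTrunc d prof)
    (α β γ rest : List V) (hα : α ≠ []) (hβ : β ≠ [])
    (hdecomp : G.outHist prof d = α ++ β ++ γ ++ rest)
    (hvisit : G.visitL α = G.visitL (α ++ β ++ γ))
    (hlast : G.lastV α = G.lastV (α ++ β))
    (l : ℕ) (hl : 1 ≤ l)
    (hlen1 : (α ++ β).length - 1 ≤ l * Fintype.card V)
    (hlen2 : (α ++ β ++ γ).length - 1 = (l + 1) * Fintype.card V)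
    (hcase : G.visitL α ≠ ∅ ∨ G.visitL (G.outHist prof d) ≠ Set.univ) :
    G.visitL α = G.visitL (G.outHist prof d) := by
  refine secure_visit_prefix_general G d prof hprof hsec α (β ++ γ) rest hα ?_ ?_ ?_ hcase
  · simpa only [List.append_assoc] using hdecomp
  · simpa only [List.append_assoc] using hvisit
  · simp only [List.length_append, Nat.add_mul] at hlen1 hlen2 ⊢
    lia
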